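/- Let E be a nonempty finite set (with the discrete σ-algebra) and let (P_μ)_{μ∈𝒫(E)} be a nonlinear Markov transition kernel family on E satisfying the global nonlinear Dobrushin condition with some constant α ∈ (0,1] and the measure-Lipschitz condition with some constant λ ∈ [0,1]. Then there exists at least one stationary measure, i.e. some π ∈ 𝒫(E) with P_π π = π. -/

import Mathlib

open MeasureTheory ProbabilityTheory

/-- Total variation distance: `d_TV(μ,ν) = 2 ⨆_{A measurable} |μ(A) − ν(A)|`. -/
noncomputable def dTV {E : Type*} [MeasurableSpace E] (μ ν : Measure E) : ℝ :=
  2 * ⨆ A : {A : Set E // MeasurableSet A}, |(μ A.1).toReal - (ν A.1).toReal|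

/-
A stationary measure is a fixed point of `μ ↦ P_μ μ`, a continuous self-map of the simplex of
probability measures on `E`, so Brouwer's theorem applies.

Brouwer's theorem comes from Scarf's lemma for the points of the simplex with denominator `N`,
ordered by each of their coordinates: for any colouring by the vertices there is a point near which
every colour `i` occurs, unless its `i`-th coordinate is almost zero. If `p` is coloured by some `i`
with `p i ≤ f p i`, this gives a point such that `p i ≤ f p i + ε` for all `i`. Since the
coordinates of `p` and of `f p` have the same sum, `f` almost fixes `p`.
-/

section Counting

open Finset

variable {α β : Type*}

lemma card_filter_image_erase_eq_two [DecidableEq α] [DecidableEq β] {f : α → β} {s : Finset α}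
    (h : #(s.image f) + 1 = #s) :
    #{u ∈ s | (s.erase u).image f = s.image f} = 2 := by
  obtain ⟨a, ha, b, hb, hab, hfab⟩ :=
    exists_ne_map_eq_of_card_lt_of_maps_to (by omega : #(s.image f) < #s)
      fun x hx => mem_image_of_mem f hx
  have himage {u v : α} (hv : v ∈ s) (hvu : v ≠ u) (hfvu : f v = f u) :
      (s.erase u).image f = s.image f := by
    refine (image_subset_image (erase_subset _ _)).antisymm (image_subset_iff.2 fun x hx => ?_)
    obtain rfl | hxu := eq_or_ne x u
    · exact hfvu ▸ mem_image_of_mem f (mem_erase.2 ⟨hvu, hv⟩)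
    · exact mem_image_of_mem f (mem_erase.2 ⟨hxu, hx⟩)
  have hinj : Set.InjOn f (s.erase a) := by
    rw [← card_image_iff, himage hb hab.symm hfab.symm, card_erase_of_mem ha]
    omega
  refine card_eq_two.2 ⟨a, b, hab, ?_⟩
  ext u
  simp only [mem_filter, mem_insert, mem_singleton]
  constructor
  · rintro ⟨hu, himg⟩
    obtain ⟨v, hv, hvu⟩ := mem_image.1 (himg ▸ mem_image_of_mem f hu)
    obtain ⟨hne, hvs⟩ := mem_erase.1 hv
    by_contra! ⟨hua, hub⟩
    obtain rfl | hva := eq_or_ne v a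
    · exact hub (hinj (mem_erase.2 ⟨hua, hu⟩) (mem_erase.2 ⟨hab.symm, hb⟩) (hvu.symm.trans hfab))
    · exact hne (hinj (mem_erase.2 ⟨hva, hvs⟩) (mem_erase.2 ⟨hua, hu⟩) hvu)
  · rintro (rfl | rfl)
    · exact ⟨ha, himage hb hab.symm hfab.symm⟩
    · exact ⟨hb, himage ha hab hfab⟩

lemma exists_odd_card_filter (r : α → β → Prop) [∀ a b, Decidable (r a b)] {s : Finset α}
    {t : Finset β} {a₀ : α} (ha₀ : a₀ ∈ s) (hodd : Odd #{b ∈ t | r a₀ b})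
    (heven : ∀ a ∈ s, a ≠ a₀ → Even #{b ∈ t | r a b}) : ∃ b ∈ t, Odd #{a ∈ s | r a b} := by
  classical
  by_contra! hcon
  have hsum : Even (∑ b ∈ t, #(s.bipartiteBelow r b)) :=
    even_sum _ fun b hb => Nat.not_odd_iff_even.1 (hcon b hb)
  rw [← sum_card_bipartiteAbove_eq_sum_card_bipartiteBelow, ← add_sum_erase s _ ha₀] at hsum
  have hrest : Even (∑ a ∈ s.erase a₀, #(t.bipartiteAbove r a)) :=
    even_sum _ fun a ha => heven a (mem_of_mem_erase ha) (ne_of_mem_erase ha)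
  exact Nat.not_even_iff_odd.2 (hodd.add_even hrest) hsum

end Counting

section Scarf

open Finset

variable {V I α : Type*} [LinearOrder α] {r : I → V → α} {S T : Finset V} {u : I} {w y : V}

/-- Scarf's dominance for the family of orders pulled back along the ranks `r i`: no point lies
strictly above `S` in the sense of exceeding, in each order, some element of `S`. -/
def IsDominant (r : I → V → α) (S : Finset V) : Prop :=
  ∀ y, ∃ i, ∀ x ∈ S, r i y ≤ r i x

/-- The index `u` is spare for `T` if each element of `T` is already the least one in some order
other than the `u`-th. In a dominant set enlarging `T` by one point, that point is the least
element for a spare index. -/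
def IsSpare (r : I → V → α) (T : Finset V) (u : I) : Prop :=
  ∀ x ∈ T, ∃ k ≠ u, ∀ x' ∈ T, r k x ≤ r k x'

/-- The points that no order other than the `u`-th places below the whole of `T`; they are the
candidates for enlarging `T` by a point that is least in the order `u`. -/
def beyond (r : I → V → α) (T : Finset V) (u : I) : Set V :=
  {z | ∀ k ≠ u, ∃ x ∈ T, r k x < r k z}

lemma IsDominant.mono (hS : IsDominant r S) (hTS : T ⊆ S) : IsDominant r T := fun y =>
  (hS y).imp fun _ hi x hx => hi x (hTS hx)

lemma IsDominant.le_of_mem_beyond (hT : IsDominant r T) (hy : y ∈ beyond r T u) :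
    ∀ x ∈ T, r u y ≤ r u x := by
  obtain ⟨k, hk⟩ := hT y
  obtain rfl | hku := eq_or_ne k u
  · exact hk
  · obtain ⟨x, hx, hxy⟩ := hy k hku
    exact absurd (hk x hx) hxy.not_ge

lemma IsDominant.eq_of_mem_beyond {v : I} (hT : IsDominant r T) (hu : y ∈ beyond r T u)
    (hv : y ∈ beyond r T v) : u = v := by
  by_contra huv
  obtain ⟨k, hk⟩ := hT y
  obtain ⟨x, hx, hxy⟩ : ∃ x ∈ T, r k x < r k y := by
    obtain rfl | hku := eq_or_ne k u
    exacts [hv k huv, hu k hku]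
  exact (hk x hx).not_gt hxy

lemma IsSpare.notMem_of_mem_beyond (hu : IsSpare r T u) (hy : y ∈ beyond r T u) : y ∉ T := by
  intro hyT
  obtain ⟨k, hku, hk⟩ := hu y hyT
  obtain ⟨x, hx, hxy⟩ := hy k hku
  exact (hk x hx).not_gt hxy

lemma IsDominant.insert_of_isMaxOn [DecidableEq V] (hT : IsDominant r T) (hy : y ∈ beyond r T u)
    (hmax : IsMaxOn (r u) (beyond r T u) y) : IsDominant r (insert y T) := by
  intro z
  by_cases hz : z ∈ beyond r T u
  · have hzy : r u z ≤ r u y := hmax hz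
    exact ⟨u, forall_mem_insert _ _ _ |>.2
      ⟨hzy, fun x hx => hzy.trans (hT.le_of_mem_beyond hy x hx)⟩⟩
  · simp only [beyond, Set.mem_ofPred_eq, not_forall, not_exists, not_and, not_lt] at hz
    obtain ⟨k, hku, hk⟩ := hz
    obtain ⟨x, hx, hxy⟩ := hy k hku
    exact ⟨k, forall_mem_insert _ _ _ |>.2 ⟨(hk x hx).trans hxy.le, hk⟩⟩

lemma IsDominant.isMaxOn_of_insert [DecidableEq V] (h : IsDominant r (insert w T)) :
    IsMaxOn (r u) (beyond r T u) w := by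
  intro z hz
  obtain ⟨k, hk⟩ := h z
  obtain rfl | hku := eq_or_ne k u
  · exact hk w (mem_insert_self _ _)
  · obtain ⟨x, hx, hxz⟩ := hz k hku
    exact absurd (hk x (mem_insert_of_mem hx)) hxz.not_ge

/-- Slack points `s i` for the orders `r`: the `i`-th one is least in the order `i` and lies above
all non-slack points in the other orders. They play the role of the vertices of the simplex. -/
structure IsSlack (r : I → V → α) (s : I → V) : Prop where
  le (i : I) (v : V) : r i (s i) ≤ r i v
  lt {i j : I} {v : V} : i ≠ j → v ∉ Set.range s → r i v < r i (s j)

lemma IsSlack.beyond_nonempty {s : I → V} (hs : IsSlack r s) (hy : y ∈ T)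
    (hys : y ∉ Set.range s) (u : I) : (beyond r T u).Nonempty :=
  ⟨s u, fun _ hk => ⟨y, hy, hs.lt hk hys⟩⟩

section Parity

variable [Fintype I]

lemma IsDominant.image_eq_of_forall_le [DecidableEq V] (hr : ∀ i, Function.Injective (r i))
    (hS : IsDominant r S) {m : I → V} (hmS : ∀ i, m i ∈ S)
    (hm : ∀ i, ∀ x ∈ S, r i (m i) ≤ r i x) : univ.image m = S := by
  refine (image_subset_iff.2 fun i _ => hmS i).antisymm fun x hx => ?_
  obtain ⟨i, hi⟩ := hS x
  exact mem_image.2 ⟨i, mem_univ i, hr i ((hm i x hx).antisymm (hi _ (hmS i)))⟩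

lemma IsDominant.exists_isSpare_mem_beyond [DecidableEq V] (hr : ∀ i, Function.Injective (r i))
    (hw : w ∉ T) (h : IsDominant r (insert w T)) (hcard : #T + 1 = Fintype.card I) :
    ∃ u, IsSpare r T u ∧ w ∈ beyond r T u := by
  choose m hmS hm using fun i => exists_min_image (insert w T) (r i) (insert_nonempty w T)
  have himage : univ.image m = insert w T := h.image_eq_of_forall_le hr hmS hm
  have hinj : Function.Injective m := by
    rw [← Set.injOn_univ, ← coe_univ, ← card_image_iff, himage, card_insert_of_notMem hw, hcard,
      card_univ]
  obtain ⟨u, -, rfl⟩ := mem_image.1 (himage ▸ mem_insert_self w T)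
  refine ⟨u, fun x hx => ?_, fun k hku => ?_⟩
  · obtain ⟨k, -, rfl⟩ := mem_image.1 (himage ▸ mem_insert_of_mem hx)
    exact ⟨k, fun hku => hw (hku ▸ hx), fun x' hx' => hm k x' (mem_insert_of_mem hx')⟩
  · have hne : m k ≠ m u := hinj.ne hku
    exact ⟨m k, mem_of_mem_insert_of_ne (hmS k) hne,
      (hm k _ (mem_insert_self _ _)).lt_of_ne ((hr k).ne hne)⟩

open Classical in
lemma IsDominant.card_filter_isSpare (hr : ∀ i, Function.Injective (r i)) (hT : IsDominant r T)
    (hne : T.Nonempty) (hcard : #T + 1 = Fintype.card I) : #{u | IsSpare r T u} = 2 := by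
  choose m hmT hm using fun i => exists_min_image T (r i) hne
  have himage : univ.image m = T := hT.image_eq_of_forall_le hr hmT hm
  rw [← card_filter_image_erase_eq_two (f := m) (s := univ) (by rw [himage, hcard, card_univ]),
    himage]
  congr 1
  ext u
  simp only [mem_filter, mem_univ, true_and]
  constructor
  · refine fun hu => (image_subset_iff.2 fun k _ => hmT k).antisymm fun x hx => ?_
    obtain ⟨k, hku, hk⟩ := hu x hx
    exact mem_image.2 ⟨k, by simpa using hku, hr k ((hm k x hx).antisymm (hk _ (hmT k)))⟩
  · intro hu x hx
    obtain ⟨k, hk, rfl⟩ := mem_image.1 (hu ▸ hx)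
    exact ⟨k, ne_of_mem_erase hk, hm k⟩

namespace IsSlack

variable {s : I → V} {i₀ : I}

lemma le_image_erase [DecidableEq V] [DecidableEq I] (hs : IsSlack r s)
    (hy : y ∉ (univ.erase i₀).image s) :
    ∀ x ∈ (univ.erase i₀).image s, r i₀ y ≤ r i₀ x := by
  intro x hx
  obtain ⟨k, hk, rfl⟩ := mem_image.1 hx
  by_cases hys : y ∈ Set.range s
  · obtain ⟨j, rfl⟩ := hys
    obtain rfl | hj := eq_or_ne j i₀
    · exact hs.le _ _
    · exact absurd (mem_image_of_mem s (mem_erase.2 ⟨hj, mem_univ j⟩)) hy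
  · exact (hs.lt (ne_of_mem_erase hk).symm hys).le

lemma isDominant_image_erase [DecidableEq V] [DecidableEq I] (hs : IsSlack r s) (i₀ : I) :
    IsDominant r ((univ.erase i₀).image s) := by
  intro y
  by_cases hy : y ∈ (univ.erase i₀).image s
  · obtain ⟨k, -, rfl⟩ := mem_image.1 hy
    exact ⟨k, fun x _ => hs.le k x⟩
  · exact ⟨i₀, hs.le_image_erase hy⟩

lemma isSpare_image_erase [DecidableEq V] [DecidableEq I] (hs : IsSlack r s) (i₀ : I) :
    IsSpare r ((univ.erase i₀).image s) i₀ := by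
  intro x hx
  obtain ⟨k, hk, rfl⟩ := mem_image.1 hx
  exact ⟨k, ne_of_mem_erase hk, fun x' _ => hs.le k x'⟩

open Classical in
lemma card_filter_isSpare_image_erase [DecidableEq V] [DecidableEq I] (hs : IsSlack r s)
    (hr : ∀ i, Function.Injective (r i)) (hsinj : Function.Injective s) (i₀ : I) :
    #{u | IsSpare r ((univ.erase i₀).image s) u ∧
      (beyond r ((univ.erase i₀).image s) u).Nonempty} = 1 := by
  refine card_eq_one.2 ⟨i₀, ?_⟩
  ext u
  simp only [mem_filter, mem_univ, true_and, mem_singleton]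
  constructor
  · rintro ⟨hspare, y, hy⟩
    by_contra hu
    obtain ⟨x, hx, hxy⟩ := hy i₀ (Ne.symm hu)
    exact (hs.le_image_erase (hspare.notMem_of_mem_beyond hy) x hx).not_gt hxy
  · rintro rfl
    refine ⟨hs.isSpare_image_erase u, s u, fun k hk => ⟨s k, ?_, ?_⟩⟩
    · exact mem_image_of_mem s (mem_erase.2 ⟨hk, mem_univ k⟩)
    · exact (hs.le k _).lt_of_ne ((hr k).ne (hsinj.ne hk))

end IsSlack

variable [Fintype V]

open Classical in
/-- The rooms of Scarf's parity argument: dominant sets with one point for each order. -/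
noncomputable def scarfRooms (r : I → V → α) : Finset (Finset V) :=
  {S | IsDominant r S ∧ #S = Fintype.card I}

open Classical in
/-- The doors of Scarf's parity argument: dominant sets one point short of a room, coloured by all
colours other than `i₀`. -/
noncomputable def scarfDoors [DecidableEq I] (r : I → V → α) (c : V → I) (i₀ : I) :
    Finset (Finset V) :=
  {T | IsDominant r T ∧ #T + 1 = Fintype.card I ∧ T.image c = univ.erase i₀}

lemma mem_scarfRooms : S ∈ scarfRooms r ↔ IsDominant r S ∧ #S = Fintype.card I := by
  simp [scarfRooms]

lemma mem_scarfDoors [DecidableEq I] {c : V → I} {i₀ : I} :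
    T ∈ scarfDoors r c i₀ ↔
      IsDominant r T ∧ #T + 1 = Fintype.card I ∧ T.image c = univ.erase i₀ := by
  simp [scarfDoors]

open Classical in
lemma IsDominant.card_filter_scarfRooms [DecidableEq V] (hr : ∀ i, Function.Injective (r i))
    (hT : IsDominant r T) (hcard : #T + 1 = Fintype.card I) :
    #{S ∈ scarfRooms r | T ⊆ S} = #{u | IsSpare r T u ∧ (beyond r T u).Nonempty} := by
  have hexists (u : I) (hu : (beyond r T u).Nonempty) :
      ∃ y ∈ beyond r T u, IsMaxOn (r u) (beyond r T u) y :=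
    Set.exists_max_image _ (r u) (Set.toFinite _) hu
  choose top htop hmax using hexists
  symm
  refine card_bij (fun u hu => insert (top u (mem_filter.1 hu).2.2) T) ?_ ?_ ?_
  · intro u hu
    obtain ⟨-, hspare, hne⟩ := mem_filter.1 hu
    refine mem_filter.2 ⟨mem_scarfRooms.2 ⟨hT.insert_of_isMaxOn (htop u hne) (hmax u hne), ?_⟩,
      subset_insert _ _⟩
    rw [card_insert_of_notMem (hspare.notMem_of_mem_beyond (htop u hne)), hcard]
  · intro u hu v hv huv
    obtain ⟨-, hu, hu'⟩ := mem_filter.1 hu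
    obtain ⟨-, -, hv⟩ := mem_filter.1 hv
    have htops : top u hu' = top v hv :=
      (insert_inj (hu.notMem_of_mem_beyond (htop u hu'))).1 huv
    exact hT.eq_of_mem_beyond (htop u hu') (htops ▸ htop v hv)
  · intro S hS
    obtain ⟨hSroom, hTS⟩ := mem_filter.1 hS
    obtain ⟨hSdom, hScard⟩ := mem_scarfRooms.1 hSroom
    obtain ⟨w, hw, rfl⟩ := exists_eq_insert_iff.2 ⟨hTS, hcard.trans hScard.symm⟩
    obtain ⟨u, hspare, hwu⟩ := hSdom.exists_isSpare_mem_beyond hr hw hcard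
    refine ⟨u, mem_filter.2 ⟨mem_univ _, hspare, w, hwu⟩, ?_⟩
    have htop_eq : top u ⟨w, hwu⟩ = w :=
      hr u ((hSdom.isMaxOn_of_insert (htop u _)).antisymm (hmax u _ hwu))
    simp only [htop_eq]

lemma even_card_filter_scarfDoors [DecidableEq V] [DecidableEq I] {c : V → I} (i₀ : I)
    (hS : S ∈ scarfRooms r) (hc : S.image c ≠ univ) : Even #{T ∈ scarfDoors r c i₀ | T ⊆ S} := by
  obtain ⟨hSdom, hScard⟩ := mem_scarfRooms.1 hS
  obtain hempty | ⟨T, hT⟩ := Finset.eq_empty_or_nonempty {T ∈ scarfDoors r c i₀ | T ⊆ S}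
  · simp [hempty]
  obtain ⟨hTdoor, hTS⟩ := mem_filter.1 hT
  obtain ⟨-, -, hTc⟩ := mem_scarfDoors.1 hTdoor
  have hSc : S.image c = univ.erase i₀ := by
    have hi₀ : i₀ ∉ S.image c := fun hi₀ => hc <| by
      rw [← insert_eq_self.2 hi₀, ← univ_subset_iff, ← insert_erase (mem_univ i₀), ← hTc]
      exact insert_subset_insert _ (image_subset_image hTS)
    exact (subset_erase.2 ⟨subset_univ _, hi₀⟩).antisymm (hTc ▸ image_subset_image hTS)
  have hdoors : {T ∈ scarfDoors r c i₀ | T ⊆ S} =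
      {v ∈ S | (S.erase v).image c = S.image c}.image S.erase := by
    ext U
    simp only [mem_filter, mem_scarfDoors, mem_image, hSc]
    constructor
    · rintro ⟨⟨-, hU, hUc⟩, hUS⟩
      obtain ⟨v, hv, rfl⟩ := exists_eq_insert_iff.2 ⟨hUS, hU.trans hScard.symm⟩
      exact ⟨v, ⟨mem_insert_self _ _, by rwa [erase_insert hv]⟩, erase_insert hv⟩
    · rintro ⟨v, ⟨hv, hvc⟩, rfl⟩
      exact ⟨⟨hSdom.mono (erase_subset _ _), (card_erase_add_one hv).trans hScard, hvc⟩,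
        erase_subset _ _⟩
  rw [hdoors, card_image_of_injOn ((erase_injOn S).mono (filter_subset _ _)),
    card_filter_image_erase_eq_two]
  · exact even_two
  · rw [hSc, card_erase_add_one (mem_univ i₀), card_univ, hScard]

namespace IsSlack

variable {s : I → V} {c : V → I} {i₀ : I}

lemma image_erase_mem_scarfDoors [DecidableEq V] [DecidableEq I] (hs : IsSlack r s)
    (hc : ∀ i, c (s i) = i) (i₀ : I) : (univ.erase i₀).image s ∈ scarfDoors r c i₀ := by
  have hsinj : Function.Injective s := Function.LeftInverse.injective hc
  refine mem_scarfDoors.2 ⟨hs.isDominant_image_erase i₀, ?_, ?_⟩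
  · rw [card_image_of_injective _ hsinj, card_erase_add_one (mem_univ i₀), card_univ]
  · rw [image_image, show c ∘ s = id from funext hc, image_id]

lemma even_card_filter_scarfRooms [DecidableEq V] [DecidableEq I] (hs : IsSlack r s)
    (hr : ∀ i, Function.Injective (r i)) (hc : ∀ i, c (s i) = i)
    (hT : T ∈ scarfDoors r c i₀) (hne : T ≠ (univ.erase i₀).image s) :
    Even #{S ∈ scarfRooms r | T ⊆ S} := by
  classical
  obtain ⟨hTdom, hTcard, hTc⟩ := mem_scarfDoors.1 hT
  obtain ⟨y, hy, hys⟩ : ∃ y ∈ T, y ∉ Set.range s := by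
    by_contra! hcon
    refine hne (eq_of_subset_of_card_le (fun x hx => ?_) ?_)
    · obtain ⟨k, rfl⟩ := hcon x hx
      exact mem_image_of_mem s (hTc ▸ hc k ▸ mem_image_of_mem c hx)
    · obtain ⟨-, hcard, -⟩ := mem_scarfDoors.1 (hs.image_erase_mem_scarfDoors hc i₀)
      omega
  simp only [hTdom.card_filter_scarfRooms hr hTcard, hs.beyond_nonempty hy hys, and_true,
    hTdom.card_filter_isSpare hr ⟨y, hy⟩ hTcard, even_two]

end IsSlack

end Parity

/- Each door lies in two rooms, except for the slack door, which lies in one, and a room missing a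
colour has no door or two. -/
theorem IsSlack.exists_isDominant_surjOn [Finite V] [Finite I] [Nonempty I] {s : I → V}
    {c : V → I} (hs : IsSlack r s) (hr : ∀ i, Function.Injective (r i)) (hc : ∀ i, c (s i) = i) :
    ∃ S : Finset V, IsDominant r S ∧ Set.SurjOn c S Set.univ := by
  classical
  cases nonempty_fintype V
  cases nonempty_fintype I
  obtain ⟨i₀⟩ := ‹Nonempty I›
  have hslack := hs.image_erase_mem_scarfDoors hc i₀
  obtain ⟨hdom, hcard, -⟩ := mem_scarfDoors.1 hslack
  have hodd : Odd #{S ∈ scarfRooms r | (univ.erase i₀).image s ⊆ S} := by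
    rw [hdom.card_filter_scarfRooms hr hcard,
      hs.card_filter_isSpare_image_erase hr (Function.LeftInverse.injective hc)]
    exact odd_one
  obtain ⟨S, hS, hSodd⟩ := exists_odd_card_filter (fun T S : Finset V => T ⊆ S) hslack hodd
    fun T hT hne => hs.even_card_filter_scarfRooms hr hc hT hne
  have hSc : S.image c = univ := by_contra fun hSc =>
    Nat.not_even_iff_odd.2 hSodd (even_card_filter_scarfDoors i₀ hS hSc)
  exact ⟨S, (mem_scarfRooms.1 hS).1, fun i _ => by simpa using hSc.ge (mem_univ i)⟩

end Scarf

section SlackRank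

open Finset

variable {α I X : Type*}

/-- The orders `r` extended to `X ⊕ I`, where the points `Sum.inr i` are slack: the `i`-th one is
put at the bottom of the `i`-th order, and all others are put on top of it. -/
noncomputable def slackRank [LinearOrder I] (r : I → X → α) (i : I) : X ⊕ I → WithBot (α ⊕ₗ I)
  | .inl x => ((Sum.inlₗ (r i x) : α ⊕ₗ I) : WithBot (α ⊕ₗ I))
  | .inr k => if k = i then ⊥ else ((Sum.inrₗ k : α ⊕ₗ I) : WithBot (α ⊕ₗ I))

lemma slackRank_injective [LinearOrder I] {r : I → X → α} (hr : ∀ i, Function.Injective (r i))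
    (i : I) : Function.Injective (slackRank r i) := by
  rintro (x | k) (y | l) h <;> simp only [slackRank] at h
  · simpa using hr i (by simpa using h)
  · split_ifs at h <;> simp at h
  · split_ifs at h <;> simp at h
  · split_ifs at h <;> simp_all

lemma isSlack_slackRank [LinearOrder α] [LinearOrder I] (r : I → X → α) :
    IsSlack (slackRank r) Sum.inr where
  le i v := by simp [slackRank]
  lt {i j v} hij hv := by
    rcases v with x | k
    · simp [slackRank, hij.symm]
    · exact absurd ⟨k, rfl⟩ hv

/-- **Scarf's lemma**. -/
theorem exists_forall_exists_le_and_surjOn [LinearOrder α] [Finite X] [Finite I] [Nonempty I]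
    {r : I → X → α} (hr : ∀ i, Function.Injective (r i)) (c : X → I) :
    ∃ (S : Finset X) (C : Finset I), (∀ y, ∃ i ∈ C, ∀ x ∈ S, r i y ≤ r i x) ∧
      Set.SurjOn c S C := by
  cases nonempty_fintype I
  let _ : LinearOrder I := LinearOrder.lift' (Fintype.equivFin I) (Equiv.injective _)
  obtain ⟨S, hS, hcS⟩ := (isSlack_slackRank r).exists_isDominant_surjOn
    (c := Sum.elim c id) (slackRank_injective hr) fun i => rfl
  refine ⟨S.toLeft, S.toRightᶜ, fun y => ?_, fun i hi => ?_⟩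
  · obtain ⟨i, hi⟩ := hS (.inl y)
    refine ⟨i, ?_, fun x hx => ?_⟩
    · rw [mem_compl, mem_toRight]
      exact fun hiS => by simpa [slackRank] using hi _ hiS
    · simpa [slackRank] using hi (.inl x) (mem_toLeft.1 hx)
  · obtain ⟨x | k, hx, rfl⟩ := hcS (Set.mem_univ i)
    · exact ⟨x, mem_toLeft.2 hx, rfl⟩
    · exact absurd (mem_toRight.2 hx) (mem_compl.1 hi)

end SlackRank

section Grid

open Finset

variable {I : Type*} [Fintype I]

lemma exists_le_sum_eq [Nonempty I] {a : I → ℕ} {N : ℕ} (ha : ∑ i, a i ≤ N) :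
    ∃ y, a ≤ y ∧ ∑ i, y i = N := by
  classical
  obtain ⟨i⟩ := ‹Nonempty I›
  refine ⟨a + Pi.single i (N - ∑ i, a i), le_self_add, ?_⟩
  simp [sum_add_distrib, ha]

lemma le_add_card_of_le_of_lt_sum_add_card {m x : I → ℕ} (hmx : m ≤ x)
    (hm : ∑ i, x i < ∑ i, m i + Fintype.card I) (j : I) : x j ≤ m j + Fintype.card I := by
  classical
  have hle : ∑ i ∈ univ.erase j, m i ≤ ∑ i ∈ univ.erase j, x i := sum_le_sum fun i _ => hmx i
  rw [← add_sum_erase _ m (mem_univ j), ← add_sum_erase _ x (mem_univ j)] at hm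
  omega

/-- The order of the grid points by their `i`-th coordinate, with ties broken arbitrarily. -/
noncomputable def coordRank [DecidableEq I] {N : ℕ} (i : I) (x : piAntidiag (univ : Finset I) N) :
    ℕ ×ₗ Fin (Fintype.card (piAntidiag (univ : Finset I) N)) :=
  toLex (x.1 i, Fintype.equivFin _ x)

lemma coordRank_injective [DecidableEq I] {N : ℕ} (i : I) :
    Function.Injective (coordRank (N := N) i) := fun _ _ h =>
  (Fintype.equivFin _).injective (congrArg (fun p => (ofLex p).2) h)

lemma exists_forall_coord_le_or_near_color [DecidableEq I] [Nonempty I] {N : ℕ}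
    (c : piAntidiag (univ : Finset I) N → I) :
    ∃ x₀ : piAntidiag (univ : Finset I) N, ∀ i, x₀.1 i ≤ Fintype.card I ∨
      ∃ x, c x = i ∧ ∀ j, x.1 j ≤ x₀.1 j + Fintype.card I ∧ x₀.1 j ≤ x.1 j + Fintype.card I := by
  obtain ⟨S, C, hdom, hcS⟩ := exists_forall_exists_le_and_surjOn coordRank_injective c
  have hcoord {a : I → ℕ} (ha : ∑ i, a i ≤ N) : ∃ i ∈ C, ∀ x ∈ S, a i ≤ x.1 i := by
    obtain ⟨y, hay, hy⟩ := exists_le_sum_eq ha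
    obtain ⟨i, hi, hle⟩ := hdom ⟨y, mem_piAntidiag.2 ⟨hy, fun i _ => mem_univ i⟩⟩
    exact ⟨i, hi, fun x hx => (hay i).trans (Prod.Lex.monotone_fst _ _ (hle x hx))⟩
  obtain ⟨i₀, hi₀, -⟩ := hcoord (a := 0) (by simp)
  obtain ⟨x₀, hx₀, -⟩ := hcS hi₀
  let m (i : I) : ℕ := if i ∈ C then S.inf' ⟨x₀, hx₀⟩ (fun x => x.1 i) else 0
  have hmx {x} (hx : x ∈ S) : m ≤ x.1 := fun i => by
    dsimp only [m]
    split_ifs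
    exacts [inf'_le _ hx, Nat.zero_le _]
  have hm : N < ∑ i, m i + Fintype.card I := by
    by_contra! hle
    obtain ⟨i, hi, hlt⟩ := hcoord (a := m + 1) (by simpa [sum_add_distrib] using hle)
    have hmi : m i + 1 ≤ m i := by
      conv_rhs => simp only [m, hi, if_true]
      exact le_inf' _ _ hlt
    omega
  have hxm {x} (hx : x ∈ S) : ∀ j, x.1 j ≤ m j + Fintype.card I :=
    le_add_card_of_le_of_lt_sum_add_card (hmx hx) (by rwa [(mem_piAntidiag.1 x.2).1])
  refine ⟨x₀, fun i => ?_⟩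
  by_cases hi : i ∈ C
  · obtain ⟨x, hx, hcx⟩ := hcS hi
    refine .inr ⟨x, hcx, fun j => ⟨?_, ?_⟩⟩
    · exact (hxm hx j).trans (Nat.add_le_add_right (hmx hx₀ j) _)
    · exact (hxm hx₀ j).trans (Nat.add_le_add_right (hmx hx j) _)
  · exact .inl (by simpa [m, hi] using hxm hx₀ i)

end Grid

section Brouwer

open Finset

variable {I : Type*} [Fintype I]

/-- The point of the simplex whose barycentric coordinates are those of `x` divided by `N`. -/
noncomputable def gridPoint [DecidableEq I] {N : ℕ} (hN : N ≠ 0)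
    (x : piAntidiag (univ : Finset I) N) : stdSimplex ℝ I :=
  ⟨fun i => x.1 i / N, fun i => by positivity, by
    rw [← sum_div, ← Nat.cast_sum, (mem_piAntidiag.1 x.2).1, div_self (Nat.cast_ne_zero.2 hN)]⟩

lemma exists_forall_coord_le_or_dist_color_le [Nonempty I] (c : stdSimplex ℝ I → I) {δ : ℝ}
    (hδ : 0 < δ) : ∃ p : stdSimplex ℝ I, ∀ i, p i ≤ δ ∨ ∃ q, c q = i ∧ dist p q ≤ δ := by
  classical
  obtain ⟨N, hN⟩ := exists_nat_gt (Fintype.card I / δ)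
  have hN₀ : 0 < (N : ℝ) := hN.trans_le' (by positivity)
  have hNδ : (Fintype.card I : ℝ) / N ≤ δ := (div_le_comm₀ hN₀ hδ).2 hN.le
  have hN₁ : N ≠ 0 := by exact_mod_cast hN₀.ne'
  obtain ⟨x₀, hx₀⟩ := exists_forall_coord_le_or_near_color fun x => c (gridPoint hN₁ x)
  refine ⟨gridPoint hN₁ x₀, fun i => (hx₀ i).imp (fun hle => ?_) ?_⟩
  · calc (x₀.1 i : ℝ) / N ≤ Fintype.card I / N := by gcongr
      _ ≤ δ := hNδ
  · rintro ⟨x, hcx, hx⟩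
    refine ⟨gridPoint hN₁ x, hcx, (dist_pi_le_iff hδ.le).2 fun j => ?_⟩
    have hle : (x.1 j : ℝ) ≤ x₀.1 j + Fintype.card I := by exact_mod_cast (hx j).1
    have hge : (x₀.1 j : ℝ) ≤ x.1 j + Fintype.card I := by exact_mod_cast (hx j).2
    calc |(x₀.1 j : ℝ) / N - x.1 j / N| = |(x₀.1 j : ℝ) - x.1 j| / N := by
          rw [← sub_div, abs_div, abs_of_pos hN₀]
      _ ≤ Fintype.card I / N := by gcongr; exact abs_sub_le_iff.2 ⟨by linarith, by linarith⟩
      _ ≤ δ := hNδ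

lemma dist_le_card_mul_of_forall_le_add {p q : stdSimplex ℝ I} {ε : ℝ} (hε : 0 ≤ ε)
    (h : ∀ i, p i ≤ q i + ε) : dist q p ≤ Fintype.card I * ε := by
  refine (dist_pi_le_iff (by positivity)).2 fun j => abs_sub_le_iff.2 ⟨?_, ?_⟩
  · calc q j - p j ≤ q j + ε - p j := by linarith
      _ ≤ ∑ i, (q i + ε - p i) :=
        single_le_sum (f := fun i => q i + ε - p i) (fun i _ => sub_nonneg.2 (h i)) (mem_univ j)
      _ = Fintype.card I * ε := by simp [sum_add_distrib, stdSimplex.sum_eq_one]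
  · have hcard : (1 : ℝ) ≤ Fintype.card I := by exact_mod_cast Fintype.card_pos_iff.2 ⟨j⟩
    calc p j - q j ≤ 1 * ε := by linarith [h j]
      _ ≤ Fintype.card I * ε := by gcongr

lemma exists_isFixedPt_of_forall_exists_dist_le {X : Type*} [MetricSpace X] [CompactSpace X]
    [Nonempty X] {f : X → X} (hf : Continuous f) (h : ∀ ε > 0, ∃ x, dist (f x) x ≤ ε) :
    ∃ x, Function.IsFixedPt f x := by
  obtain ⟨x, -, hx⟩ := isCompact_univ.exists_isMinOn Set.univ_nonempty
    (hf.dist continuous_id).continuousOn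
  refine ⟨x, dist_le_zero.1 (le_of_forall_pos_le_add fun ε hε => ?_)⟩
  obtain ⟨y, hy⟩ := h ε hε
  exact (hx (Set.mem_univ y)).trans (by simpa using hy)

lemma exists_forall_le_add [Nonempty I] {f : stdSimplex ℝ I → stdSimplex ℝ I} (hf : Continuous f)
    {ε : ℝ} (hε : 0 < ε) : ∃ p, ∀ i, p i ≤ f p i + ε := by
  have hcolor (p : stdSimplex ℝ I) : ∃ i, p i ≤ f p i := by
    obtain ⟨i, -, hi⟩ := exists_le_of_sum_le (s := univ) (f := p) (g := f p) univ_nonempty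
      (by rw [stdSimplex.sum_eq_one, stdSimplex.sum_eq_one])
    exact ⟨i, hi⟩
  choose c hc using hcolor
  obtain ⟨δ, hδ, hfδ⟩ := Metric.uniformContinuous_iff_le.1
    (CompactSpace.uniformContinuous_of_continuous hf) (ε / 2) (half_pos hε)
  obtain ⟨p, hp⟩ := exists_forall_coord_le_or_dist_color_le c (lt_min hδ (half_pos hε))
  refine ⟨p, fun i => ?_⟩
  obtain hle | ⟨q, rfl, hpq⟩ := hp i
  · linarith [stdSimplex.zero_le (f p) i, min_le_right δ (ε / 2)]
  · have hp : p (c q) - q (c q) ≤ ε / 2 :=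
      (le_abs_self _).trans <| (dist_le_pi_dist _ _ (c q)).trans (hpq.trans (min_le_right _ _))
    have hf : f q (c q) - f p (c q) ≤ ε / 2 :=
      (le_abs_self _).trans <| (dist_le_pi_dist _ _ (c q)).trans
        (hfδ (by rw [dist_comm]; exact hpq.trans (min_le_left _ _)))
    linarith [hc q]

theorem exists_isFixedPt_stdSimplex [Nonempty I] {f : stdSimplex ℝ I → stdSimplex ℝ I}
    (hf : Continuous f) : ∃ p, Function.IsFixedPt f p := by
  refine exists_isFixedPt_of_forall_exists_dist_le hf fun ε hε => ?_
  have hcard : (0 : ℝ) < Fintype.card I := Nat.cast_pos.2 Fintype.card_pos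
  obtain ⟨p, hp⟩ := exists_forall_le_add hf (div_pos hε hcard)
  refine ⟨p, (dist_le_card_mul_of_forall_le_add (by positivity) hp).trans_eq ?_⟩
  exact mul_div_cancel₀ _ hcard.ne'

end Brouwer

section Measure

open Filter Topology

lemma continuous_stdSimplex_apply {I : Type*} [Fintype I] (i : I) :
    Continuous fun p : stdSimplex ℝ I => p i :=
  (continuous_apply i).comp continuous_subtype_val

variable {E : Type*} [MeasurableSpace E]

lemma dTV_nonneg (μ ν : Measure E) : 0 ≤ dTV μ ν :=
  mul_nonneg zero_le_two (Real.iSup_nonneg fun _ => abs_nonneg _)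

lemma two_mul_abs_measureReal_sub_le_dTV (μ ν : Measure E) [IsFiniteMeasure μ] [IsFiniteMeasure ν]
    {A : Set E} (hA : MeasurableSet A) : 2 * |μ.real A - ν.real A| ≤ dTV μ ν := by
  refine mul_le_mul_of_nonneg_left ?_ zero_le_two
  refine le_ciSup (f := fun A : {A : Set E // MeasurableSet A} => |μ.real A.1 - ν.real A.1|)
    ⟨μ.real Set.univ + ν.real Set.univ, ?_⟩ ⟨A, hA⟩
  rintro _ ⟨B, rfl⟩
  calc |μ.real B.1 - ν.real B.1| ≤ |μ.real B.1| + |ν.real B.1| := abs_sub _ _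
    _ = μ.real B.1 + ν.real B.1 := by
      rw [abs_of_nonneg measureReal_nonneg, abs_of_nonneg measureReal_nonneg]
    _ ≤ μ.real Set.univ + ν.real Set.univ := by
      gcongr <;> first | finiteness | exact Set.subset_univ _

/-- Continuity of each of the maps `μ ↦ P μ x` on the probability measures, in total variation.
The neighbourhoods of `μ` are encoded as the pullback of those of `0` along `dTV μ`. -/
def IsTVContinuous (P : Measure E → Kernel E E) : Prop :=
  ∀ (μ : ProbabilityMeasure E) (x : E),
    Tendsto (fun ν : ProbabilityMeasure E => dTV (P μ x) (P ν x))
      (comap (fun ν : ProbabilityMeasure E => dTV (μ : Measure E) ν) (𝓝 0)) (𝓝 0)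

lemma isTVContinuous_of_dTV_le {P : Measure E → Kernel E E} {lam : ℝ}
    (hP : ∀ μ ν : Measure E, IsProbabilityMeasure μ → IsProbabilityMeasure ν →
      ∀ x, dTV (P μ x) (P ν x) ≤ lam * dTV μ ν) : IsTVContinuous P := fun μ x =>
  squeeze_zero (fun _ => dTV_nonneg _ _) (fun ν => hP μ ν μ.2 ν.2 x) <|
    (tendsto_comap.const_mul lam).trans_eq (congrArg 𝓝 (mul_zero lam))

/-- One step of the nonlinear Markov chain, `μ ↦ P_μ μ`. -/
noncomputable def nonlinearStep (P : Measure E → Kernel E E)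
    (hMarkov : ∀ μ : ProbabilityMeasure E, IsMarkovKernel (P μ)) (μ : ProbabilityMeasure E) :
    ProbabilityMeasure E :=
  have := hMarkov μ
  ⟨(μ : Measure E).bind (P μ), inferInstance⟩

variable [Fintype E] [MeasurableSingletonClass E]

lemma dTV_le_two_mul_sum (μ ν : Measure E) [IsFiniteMeasure μ] [IsFiniteMeasure ν] :
    dTV μ ν ≤ 2 * ∑ i, |μ.real {i} - ν.real {i}| := by
  classical
  have : Nonempty {A : Set E // MeasurableSet A} := ⟨∅, .empty⟩
  refine mul_le_mul_of_nonneg_left (ciSup_le fun A => ?_) zero_le_two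
  calc |μ.real A.1 - ν.real A.1| = |∑ i ∈ A.1.toFinset, (μ.real {i} - ν.real {i})| := by
        simp [Finset.sum_sub_distrib]
    _ ≤ ∑ i ∈ A.1.toFinset, |μ.real {i} - ν.real {i}| := Finset.abs_sum_le_sum_abs _ _
    _ ≤ ∑ i, |μ.real {i} - ν.real {i}| :=
      Finset.sum_le_univ_sum_of_nonneg fun i => abs_nonneg _

lemma measureReal_bind_eq_sum {F : Type*} [MeasurableSpace F] (μ : Measure E) [IsFiniteMeasure μ]
    (κ : Kernel E F) [IsFiniteKernel κ] {A : Set F} (hA : MeasurableSet A) :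
    (μ.bind κ).real A = ∑ i, μ.real {i} * (κ i).real A := by
  rw [measureReal_def, Measure.bind_apply hA κ.aemeasurable, lintegral_fintype,
    ENNReal.toReal_sum fun i _ => by finiteness]
  exact Finset.sum_congr rfl fun i _ => by
    rw [ENNReal.toReal_mul, mul_comm, measureReal_def, measureReal_def]

/-- The probability measure on a finite space whose masses at the points are the barycentric
coordinates of `p`. -/
noncomputable def simplexMeasure (p : stdSimplex ℝ E) : ProbabilityMeasure E :=
  ⟨(PMF.ofFintype (fun i => ENNReal.ofReal (p i)) (by
    rw [← ENNReal.ofReal_sum_of_nonneg fun i _ => stdSimplex.zero_le p i,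
      stdSimplex.sum_eq_one, ENNReal.ofReal_one])).toMeasure, inferInstance⟩

lemma simplexMeasure_real_singleton (p : stdSimplex ℝ E) (i : E) :
    (simplexMeasure p : Measure E).real {i} = p i := by
  rw [simplexMeasure, ProbabilityMeasure.coe_mk, measureReal_def,
    PMF.toMeasure_apply_singleton _ _ (measurableSet_singleton i), PMF.ofFintype_apply,
    ENNReal.toReal_ofReal (stdSimplex.zero_le p i)]

/-- The barycentric coordinates of a probability measure on a finite space: its masses at the
points. This is the inverse of `simplexMeasure`. -/
noncomputable def weights (μ : ProbabilityMeasure E) : stdSimplex ℝ E :=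
  ⟨fun i => (μ : Measure E).real {i}, fun _ => measureReal_nonneg, by
    rw [sum_measureReal_singleton, Finset.coe_univ, probReal_univ]⟩

lemma simplexMeasure_weights (μ : ProbabilityMeasure E) : simplexMeasure (weights μ) = μ :=
  ProbabilityMeasure.toMeasure_injective <| Measure.ext_of_measureReal_singleton fun i =>
    simplexMeasure_real_singleton (weights μ) i

lemma tendsto_dTV_simplexMeasure (p : stdSimplex ℝ E) :
    Tendsto (fun q => dTV (simplexMeasure p : Measure E) (simplexMeasure q)) (𝓝 p) (𝓝 0) := by
  have hsum : Continuous fun q : stdSimplex ℝ E => 2 * ∑ i, |p i - q i| :=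
    continuous_const.mul <| continuous_finsetSum _ fun i _ =>
      (continuous_const.sub (continuous_stdSimplex_apply i)).abs
  refine squeeze_zero (fun _ => dTV_nonneg _ _) (fun q => ?_) (by simpa using hsum.tendsto p)
  simpa only [simplexMeasure_real_singleton] using
    dTV_le_two_mul_sum (simplexMeasure p : Measure E) (simplexMeasure q)

lemma IsTVContinuous.continuous_measureReal_simplexMeasure {P : Measure E → Kernel E E}
    (hP : IsTVContinuous P) (hMarkov : ∀ μ : ProbabilityMeasure E, IsMarkovKernel (P μ))
    (i j : E) :
    Continuous fun p : stdSimplex ℝ E => (P (simplexMeasure p) i).real {j} := by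
  refine continuous_iff_continuousAt.2 fun p => tendsto_iff_dist_tendsto_zero.2 ?_
  refine squeeze_zero (fun _ => dist_nonneg) (fun q => ?_)
    ((hP (simplexMeasure p) i).comp (tendsto_comap_iff.2 (tendsto_dTV_simplexMeasure p)))
  have hle := two_mul_abs_measureReal_sub_le_dTV (P (simplexMeasure p) i) (P (simplexMeasure q) i)
    (measurableSet_singleton j)
  rw [dist_comm, Real.dist_eq]
  exact (le_mul_of_one_le_left (abs_nonneg _) one_le_two).trans hle

lemma IsTVContinuous.continuous_weights_nonlinearStep {P : Measure E → Kernel E E}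
    (hP : IsTVContinuous P) (hMarkov : ∀ μ : ProbabilityMeasure E, IsMarkovKernel (P μ)) :
    Continuous fun p => weights (nonlinearStep P hMarkov (simplexMeasure p)) := by
  refine Continuous.subtype_mk (continuous_pi fun j => ?_) _
  have hstep (p : stdSimplex ℝ E) :
      (nonlinearStep P hMarkov (simplexMeasure p) : Measure E).real {j} =
        ∑ i, p i * (P (simplexMeasure p) i).real {j} :=
    (measureReal_bind_eq_sum _ _ (measurableSet_singleton j)).trans <| by
      simp only [simplexMeasure_real_singleton]
  simp only [hstep]
  exact continuous_finsetSum _ fun i _ => (continuous_stdSimplex_apply i).mul <|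
    hP.continuous_measureReal_simplexMeasure hMarkov i j

end Measure

theorem stmt16_general {E : Type*} [Finite E] [Nonempty E] [MeasurableSpace E]
    [MeasurableSingletonClass E] (P : Measure E → Kernel E E)
    (hMarkov : ∀ μ : ProbabilityMeasure E, IsMarkovKernel (P μ)) (hP : IsTVContinuous P) :
    ∃ π : Measure E, IsProbabilityMeasure π ∧ π.bind ⇑(P π) = π := by
  cases nonempty_fintype E
  obtain ⟨p, hp⟩ := exists_isFixedPt_stdSimplex (hP.continuous_weights_nonlinearStep hMarkov)
  have hstat : nonlinearStep P hMarkov (simplexMeasure p) = simplexMeasure p :=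
    (simplexMeasure_weights _).symm.trans (congrArg simplexMeasure hp)
  exact ⟨simplexMeasure p, inferInstance, congrArg Subtype.val hstat⟩

/-- On a nonempty finite state space (with the discrete σ-algebra), any nonlinear Markov
kernel family satisfying the global nonlinear Dobrushin condition with some `α ∈ (0,1]`
and the measure-Lipschitz condition with some `lam ∈ [0,1]` has at least one stationary
measure. -/
theorem stmt16 {E : Type*} [Fintype E] [Nonempty E] [MeasurableSpace E]
    [MeasurableSingletonClass E]
    (P : Measure E → Kernel E E) (hMarkov : ∀ μ, IsMarkovKernel (P μ))
    (α lam : ℝ) (hα0 : 0 < α) (hα1 : α ≤ 1) (hlam0 : 0 ≤ lam) (hlam1 : lam ≤ 1)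
    (hDobr : ∀ μ ν : Measure E, IsProbabilityMeasure μ → IsProbabilityMeasure ν →
      ∀ x y : E, dTV ((P μ) x) ((P ν) y) ≤ 2 * (1 - α))
    (hLip : ∀ μ ν : Measure E, IsProbabilityMeasure μ → IsProbabilityMeasure ν →
      ∀ x : E, dTV ((P μ) x) ((P ν) x) ≤ lam * dTV μ ν) :
    ∃ π : Measure E, IsProbabilityMeasure π ∧ π.bind ⇑(P π) = π :=
  stmt16_general P (fun μ => hMarkov μ) (isTVContinuous_of_dTV_le hLip)
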